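/- arXiv:1909.11570 — 13 statements merged into one kernel-verified Lean document; each statement's English description precedes it below -/
import Mathlib

section
/- If A is a compact operator, then liminf_{i → ∞} ‖y^i − P_{Y_{i-1}} y^i‖ = 0, where P_{Y_{i-1}} denotes the orthogonal projection onto Y_{i-1} (with Y_0 = {0}). -/
/-- Let `U`, `Y` be real Hilbert spaces, `A : U → Y` a bounded linear operator, and
`(uᵢ)` a sequence of unit vectors in `U`; set `yᵢ = A uᵢ` and let
`Yₙ = span {y⁰, …, yⁿ⁻¹}` (so `Y₀ = {0}`), with orthogonal projections `Q n` onto `Yₙ`.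
If `A` is a compact operator, then `liminf_{i → ∞} ‖yᵢ − Q i yᵢ‖ = 0`. -/
theorem liminf_gram_schmidt_residual_eq_zero_of_compact
    {U Y : Type*} [NormedAddCommGroup U] [InnerProductSpace ℝ U] [CompleteSpace U]
    [NormedAddCommGroup Y] [InnerProductSpace ℝ Y] [CompleteSpace Y]
    (A : U →L[ℝ] Y) (hA : IsCompactOperator (A : U → Y))
    (u : ℕ → U) (hu : ∀ i, ‖u i‖ = 1)
    (Q : ℕ → Y →L[ℝ] Y)
    (hQ : ∀ n, ∀ z : Y,
      Q n z ∈ Submodule.span ℝ ((fun i => A (u i)) '' Set.Iio n) ∧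
      z - Q n z ∈ (Submodule.span ℝ ((fun i => A (u i)) '' Set.Iio n))ᗮ) :
    Filter.liminf (fun i : ℕ => ‖A (u i) - Q i (A (u i))‖) Filter.atTop = 0 := by
  have key : ∀ i j, j < i → ‖A (u i) - Q i (A (u i))‖ ≤ ‖A (u i) - A (u j)‖ := by
    intro i j hij
    obtain ⟨h1, h2⟩ := hQ i (A (u i))
    have hj : A (u j) ∈ Submodule.span ℝ ((fun i => A (u i)) '' Set.Iio i) :=
      Submodule.subset_span ⟨j, hij, rfl⟩
    have h3 := (Submodule.mem_orthogonal _ _).1 h2 _ (Submodule.sub_mem _ h1 hj)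
    have h4 := norm_add_sq_real (Q i (A (u i)) - A (u j)) (A (u i) - Q i (A (u i)))
    rw [h3, show Q i (A (u i)) - A (u j) + (A (u i) - Q i (A (u i))) = A (u i) - A (u j) by
      abel] at h4
    apply le_of_sq_le_sq _ (norm_nonneg _)
    nlinarith [sq_nonneg ‖Q i (A (u i)) - A (u j)‖]
  have freq : ∀ ε : ℝ, 0 < ε →
      ∃ᶠ i in Filter.atTop, ‖A (u i) - Q i (A (u i))‖ ≤ ε := by
    intro ε hε
    have hc := hA.isCompact_closure_image_closedBall (𝕜₁ := ℝ) (f := A.toLinearMap) 1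
    obtain ⟨a, -, φ, hφ, hlim⟩ := hc.tendsto_subseq (x := fun i => A (u i))
      (fun i => subset_closure ⟨u i, by simp [hu i], rfl⟩)
    obtain ⟨N, hN⟩ := Metric.cauchySeq_iff.1 hlim.cauchySeq ε hε
    rw [Filter.frequently_atTop]
    intro m
    refine ⟨φ (max m N + 1), ?_, ?_⟩
    · have := hφ.id_le (max m N + 1)
      simp only [id] at this
      omega
    · refine (key _ (φ (max m N)) (hφ (Nat.lt_succ_self _))).trans ?_
      have := hN (max m N + 1) (by omega) (max m N) (by omega)
      rw [dist_eq_norm] at this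
      exact this.le
  have hb : Filter.IsBoundedUnder (· ≥ ·) Filter.atTop
      (fun i : ℕ => ‖A (u i) - Q i (A (u i))‖) :=
    Filter.isBoundedUnder_of ⟨0, fun i => norm_nonneg _⟩
  apply le_antisymm
  · refine le_of_forall_pos_le_add fun ε hε => ?_
    rw [zero_add]
    exact Filter.liminf_le_of_frequently_le (freq ε hε) hb
  · exact Filter.le_liminf_of_le (Filter.IsCoboundedUnder.of_frequently_le (freq 1 one_pos))
      (Filter.Eventually.of_forall fun i => norm_nonneg _)
end

section
/- For every n ≥ 2, if w ∈ U satisfies A w = y^n − P_{Y_{n-1}} y^n, then ‖w‖ ≥ ‖u^n − P_{U_{n-1}} u^n‖, where P_{U_{n-1}} and P_{Y_{n-1}} are the orthogonal projections onto U_{n-1} and Y_{n-1} respectively. -/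
/-- Let `U`, `Y` be real Hilbert spaces, `A : U → Y` an injective bounded linear operator,
`(uⁱ)_{i ≥ 1}` a sequence in `U` with `yⁱ = A uⁱ`, and let
`U_{n-1} = span {u¹, …, u^{n-1}}`, `Y_{n-1} = span {y¹, …, y^{n-1}}` with orthogonal
projections `P` and `Q`.  For every `n ≥ 2`, if `w ∈ U` satisfies
`A w = yⁿ − Q yⁿ`, then `‖w‖ ≥ ‖uⁿ − P uⁿ‖`. -/
theorem norm_transformed_input_lower_bound
    {U Y : Type*} [NormedAddCommGroup U] [InnerProductSpace ℝ U] [CompleteSpace U]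
    [NormedAddCommGroup Y] [InnerProductSpace ℝ Y] [CompleteSpace Y]
    (A : U →L[ℝ] Y) (hA : Function.Injective A)
    (u : ℕ → U) (n : ℕ) (hn : 2 ≤ n)
    (P : U →L[ℝ] U)
    (hP : ∀ x : U, P x ∈ Submodule.span ℝ (u '' Set.Icc 1 (n - 1)) ∧
      x - P x ∈ (Submodule.span ℝ (u '' Set.Icc 1 (n - 1)))ᗮ)
    (Q : Y →L[ℝ] Y)
    (hQ : ∀ z : Y, Q z ∈ Submodule.span ℝ ((fun i => A (u i)) '' Set.Icc 1 (n - 1)) ∧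
      z - Q z ∈ (Submodule.span ℝ ((fun i => A (u i)) '' Set.Icc 1 (n - 1)))ᗮ)
    (w : U) (hw : A w = A (u n) - Q (A (u n))) :
    ‖u n - P (u n)‖ ≤ ‖w‖ := by
  obtain ⟨hPm, hPo⟩ := hP (u n)
  have hspan : Submodule.span ℝ ((fun i => A (u i)) '' Set.Icc 1 (n - 1)) =
      (Submodule.span ℝ (u '' Set.Icc 1 (n - 1))).map (A : U →ₗ[ℝ] Y) := by
    rw [Submodule.map_span, Set.image_image]
    rfl
  have hQm := (hQ (A (u n))).1
  rw [hspan] at hQm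
  obtain ⟨v, hv, hvQ⟩ := Submodule.mem_map.1 hQm
  have hvQ' : A v = Q (A (u n)) := hvQ
  have hwv : w = u n - v := by
    apply hA
    rw [hw, map_sub, hvQ']
  have horth : inner ℝ (P (u n) - v) (u n - P (u n)) = 0 :=
    (Submodule.mem_orthogonal _ _).1 hPo _ (Submodule.sub_mem _ hPm hv)
  have hsum : w = (P (u n) - v) + (u n - P (u n)) := by
    rw [hwv]; abel
  have hpy := norm_add_sq_eq_norm_sq_add_norm_sq_real horth
  rw [← hsum] at hpy
  nlinarith [norm_nonneg w, norm_nonneg (u n - P (u n)), mul_self_nonneg ‖P (u n) - v‖]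
end

section
/- Suppose the union over n of the subspaces span{u^1, ..., u^n} is dense in U. For each n let w_n ∈ U satisfy A w_n = P_{Y_n} y, where Y_n = span{A u^1, ..., A u^n} and P_{Y_n} is the orthogonal projection onto Y_n. If there exists a constant C with ‖w_n‖ ≤ C for all n, then w_n converges weakly to u†, i.e. ⟨w_n, v⟩ → ⟨u†, v⟩ for every v ∈ U. -/
open scoped RealInnerProductSpace

/-- Let `U`, `Y` be real Hilbert spaces, `A : U → Y` an injective bounded linear operator,
`(uᵢ)` a sequence in `U` whose spans `span {u₀, …, uₙ}` have dense union in `U`,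
`uex ∈ U` and `y = A uex`.  For each `n` let `wₙ ∈ U` satisfy `A wₙ = Q n y`, where
`Q n` is the orthogonal projection onto `Yₙ = span {A u₀, …, A u_{n-1}}`.  If there is
a constant `C` with `‖wₙ‖ ≤ C` for all `n`, then `wₙ ⇀ uex` weakly, i.e.
`⟪wₙ, v⟫ → ⟪uex, v⟫` for every `v ∈ U`. -/
theorem weak_convergence_of_bounded_projected_solutions
    {U Y : Type*} [NormedAddCommGroup U] [InnerProductSpace ℝ U] [CompleteSpace U]
    [NormedAddCommGroup Y] [InnerProductSpace ℝ Y] [CompleteSpace Y]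
    (A : U →L[ℝ] Y) (hA : Function.Injective A)
    (u : ℕ → U)
    (hdense : Dense (⋃ n : ℕ, (Submodule.span ℝ (u '' Set.Iic n) : Set U)))
    (uex : U) (y : Y) (hy : y = A uex)
    (Q : ℕ → Y →L[ℝ] Y)
    (hQ : ∀ n, ∀ z : Y,
      Q n z ∈ Submodule.span ℝ ((fun i => A (u i)) '' Set.Iio n) ∧
      z - Q n z ∈ (Submodule.span ℝ ((fun i => A (u i)) '' Set.Iio n))ᗮ)
    (w : ℕ → U) (hw : ∀ n, A (w n) = Q n y)
    (C : ℝ) (hbound : ∀ n, ‖w n‖ ≤ C) :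
    ∀ v : U, Filter.Tendsto (fun n => ⟪w n, v⟫) Filter.atTop (nhds ⟪uex, v⟫) := by
  have hd : Dense (Set.range (ContinuousLinearMap.adjoint A)) := by
    have h1 : ((ContinuousLinearMap.adjoint A).range)ᗮ = ⊥ := by
      rw [Submodule.eq_bot_iff]
      intro x hx
      apply hA
      rw [map_zero]
      have h2 := (Submodule.mem_orthogonal _ x).1 hx (ContinuousLinearMap.adjoint A (A x)) ⟨A x, rfl⟩
      rw [ContinuousLinearMap.adjoint_inner_left] at h2
      exact inner_self_eq_zero.1 h2
    have h3 := (Submodule.topologicalClosure_eq_top_iff).2 h1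
    exact (Submodule.dense_iff_topologicalClosure_eq_top).2 h3
  have hr : ∀ ε > 0, ∃ N, ∀ n ≥ N, ‖A (w n - uex)‖ < ε := by
    intro ε hε
    have hc : 0 < ‖A‖ + 1 := by positivity
    obtain ⟨x, hx, hxd⟩ := Metric.dense_iff.1 hdense uex (ε / (‖A‖ + 1)) (by positivity)
    obtain ⟨m, hm⟩ := Set.mem_iUnion.1 hxd
    refine ⟨m + 1, fun n hn => ?_⟩
    obtain ⟨hq1, hq2⟩ := hQ n y
    have hAx : A x ∈ Submodule.span ℝ ((fun i => A (u i)) '' Set.Iio n) := by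
      have h1 : A x ∈ (Submodule.span ℝ (u '' Set.Iic m)).map (A : U →ₗ[ℝ] Y) := ⟨x, hm, rfl⟩
      rw [Submodule.map_span] at h1
      refine Submodule.span_mono ?_ h1
      rintro _ ⟨_, ⟨i, hi, rfl⟩, rfl⟩
      refine ⟨i, ?_, rfl⟩
      have : i ≤ m := hi
      show i < n
      omega
    have horth : ⟪Q n y - A x, y - Q n y⟫ = 0 :=
      (Submodule.mem_orthogonal _ _).1 hq2 _ (Submodule.sub_mem _ hq1 hAx)
    have hpy := norm_add_sq_eq_norm_sq_add_norm_sq_real horth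
    have e : Q n y - A x + (y - Q n y) = A (uex - x) := by rw [map_sub, ← hy]; abel
    rw [e] at hpy
    have h4 : ‖y - Q n y‖ ≤ ‖A (uex - x)‖ := by
      by_contra! h
      nlinarith [norm_nonneg (A (uex - x)), norm_nonneg (Q n y - A x)]
    have h5 : ‖uex - x‖ < ε / (‖A‖ + 1) := by
      rw [← dist_eq_norm, dist_comm]; exact hx
    rw [map_sub, hw, ← hy, norm_sub_rev]
    rw [lt_div_iff₀ hc] at h5
    have h6 := A.le_opNorm (uex - x)
    nlinarith [norm_nonneg (uex - x), norm_nonneg A]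
  intro v
  rw [Metric.tendsto_atTop]
  intro ε hε
  have hC : 0 ≤ C := (norm_nonneg _).trans (hbound 0)
  have hK : 0 < C + ‖uex‖ + 1 := by positivity
  obtain ⟨_, hx, ⟨z, rfl⟩⟩ := Metric.dense_iff.1 hd v (ε / 2 / (C + ‖uex‖ + 1)) (by positivity)
  obtain ⟨N, hN⟩ := hr (ε / 2 / (‖z‖ + 1)) (by positivity)
  refine ⟨N, fun n hn => ?_⟩
  have h1 := hN n hn
  rw [lt_div_iff₀ (by positivity)] at h1
  have h2 : ‖v - ContinuousLinearMap.adjoint A z‖ < ε / 2 / (C + ‖uex‖ + 1) := by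
    rw [← dist_eq_norm, dist_comm]; exact hx
  rw [lt_div_iff₀ hK] at h2
  have e : ⟪w n, v⟫ - ⟪uex, v⟫ = ⟪w n - uex, v - ContinuousLinearMap.adjoint A z⟫
      + ⟪A (w n - uex), z⟫ := by
    rw [← ContinuousLinearMap.adjoint_inner_right, ← inner_add_right, sub_add_cancel, inner_sub_left]
  rw [Real.dist_eq, e]
  have h3 := abs_real_inner_le_norm (w n - uex) (v - ContinuousLinearMap.adjoint A z)
  have h4 := abs_real_inner_le_norm (A (w n - uex)) z
  have h5 : ‖w n - uex‖ ≤ C + ‖uex‖ := (norm_sub_le _ _).trans (by linarith [hbound n])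
  have h6 := mul_le_mul_of_nonneg_right h5 (norm_nonneg (v - ContinuousLinearMap.adjoint A z))
  refine (abs_add_le _ _).trans_lt ?_
  nlinarith [norm_nonneg (v - ContinuousLinearMap.adjoint A z), norm_nonneg (A (w n - uex))]
end

section
/- Assume: (i) Σ_{i=1}^∞ |⟨u†, e^i⟩| =: S < ∞; and (ii) there is a constant C > 0 such that for every n ≥ 1 and every i ≥ n+1, every w ∈ span{e^1, ..., e^n} with A w = P_{Y_n} f^i satisfies ‖w‖² ≤ C, where Y_n = span{f^1, ..., f^n} and P_{Y_n} is the orthogonal projection onto Y_n. Then for every n ≥ 1, every w ∈ U with A w = P_{Y_n}(A u†) satisfies ‖w‖ ≤ S · √(max(C, 1)); in particular the minimum-norm solutions of the projected problems are uniformly bounded in n. -/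
open scoped RealInnerProductSpace

/-- Let `U`, `Y` be real Hilbert spaces, `A : U → Y` an injective bounded linear operator,
`(eᵢ)` an orthonormal sequence in `U` with `fᵢ = A eᵢ`, and `uex ∈ U` in the closed
linear span of the `eᵢ`.  Assume (i) `Σᵢ |⟪uex, eᵢ⟫| = S < ∞`; (ii) there is `C > 0`
such that for every `n ≥ 1` and every `i ≥ n+1` (0-based: `i ≥ n`), every
`w ∈ span {e₀, …, e_{n-1}}` with `A w = Q n fᵢ` satisfies `‖w‖² ≤ C`, where `Q n` is
the orthogonal projection onto `Yₙ = span {f₀, …, f_{n-1}}`.  Then for every `n ≥ 1`,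
every `w ∈ U` with `A w = Q n (A uex)` satisfies `‖w‖ ≤ S · √(max C 1)`. -/
theorem uniform_bound_of_projected_solutions
    {U Y : Type*} [NormedAddCommGroup U] [InnerProductSpace ℝ U] [CompleteSpace U]
    [NormedAddCommGroup Y] [InnerProductSpace ℝ Y] [CompleteSpace Y]
    (A : U →L[ℝ] Y) (hA : Function.Injective A)
    (e : ℕ → U) (he : Orthonormal ℝ e)
    (uex : U)
    (huex : uex ∈ (Submodule.span ℝ (Set.range e)).topologicalClosure)
    (hsummable : Summable (fun i : ℕ => |⟪uex, e i⟫|))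
    (S : ℝ) (hS : ∑' i : ℕ, |⟪uex, e i⟫| = S)
    (Q : ℕ → Y →L[ℝ] Y)
    (hQ : ∀ n, ∀ z : Y,
      Q n z ∈ Submodule.span ℝ ((fun i => A (e i)) '' Set.Iio n) ∧
      z - Q n z ∈ (Submodule.span ℝ ((fun i => A (e i)) '' Set.Iio n))ᗮ)
    (C : ℝ) (hC : 0 < C)
    (hcoef : ∀ n : ℕ, 1 ≤ n → ∀ i : ℕ, n ≤ i →
      ∀ w ∈ Submodule.span ℝ (e '' Set.Iio n),
        A w = Q n (A (e i)) → ‖w‖ ^ 2 ≤ C) :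
    ∀ n : ℕ, 1 ≤ n → ∀ w : U, A w = Q n (A uex) →
      ‖w‖ ≤ S * Real.sqrt (max C 1) := by
  classical
  -- Fourier expansion of `uex`
  have hsumN : Summable (fun i : ℕ => ⟪uex, e i⟫ • e i) := by
    apply Summable.of_norm
    simpa [norm_smul, he.1] using hsummable
  have hexp : HasSum (fun i : ℕ => ⟪uex, e i⟫ • e i) uex := by
    obtain ⟨v, hv⟩ := hsumN
    have hin : ∀ j, ⟪e j, v⟫ = ⟪uex, e j⟫ := by
      intro j
      have h1 := hv.mapL (innerSL ℝ (e j))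
      have h2 : HasSum (fun i : ℕ => (innerSL ℝ (e j)) (⟪uex, e i⟫ • e i)) ⟪uex, e j⟫ := by
        have h3 := hasSum_single (f := fun i : ℕ => (innerSL ℝ (e j)) (⟪uex, e i⟫ • e i)) j
          (by
            intro i hij
            simp [inner_smul_right, he.2 hij.symm])
        simpa [inner_smul_right, real_inner_self_eq_norm_sq, he.1] using h3
      exact h1.unique h2
    have hvmem : v ∈ (Submodule.span ℝ (Set.range e)).topologicalClosure := by
      refine (Submodule.isClosed_topologicalClosure _).mem_of_tendsto hv
        (Filter.Eventually.of_forall fun s => ?_)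
      refine Submodule.sum_mem _ fun i _ => Submodule.smul_mem _ _ ?_
      exact Submodule.le_topologicalClosure _ (Submodule.subset_span ⟨i, rfl⟩)
    have horth : uex - v ∈ (Submodule.span ℝ (Set.range e)).topologicalClosureᗮ := by
      rw [Submodule.orthogonal_closure, Submodule.mem_orthogonal]
      intro u hu
      induction hu using Submodule.span_induction with
      | mem x hx =>
        obtain ⟨j, rfl⟩ := hx
        rw [inner_sub_right, hin j, real_inner_comm, sub_self]
      | zero => simp
      | add x y _ _ hx hy => rw [inner_add_left, hx, hy, add_zero]
      | smul a x _ hx => rw [inner_smul_left, hx, mul_zero]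
    have h0 : ⟪uex - v, uex - v⟫ = 0 :=
      (Submodule.mem_orthogonal _ _).1 horth _ (Submodule.sub_mem _ huex hvmem)
    have : uex = v := sub_eq_zero.1 (inner_self_eq_zero.1 h0)
    rw [← this] at hv
    exact hv
  intro n hn w hw
  have hpre : ∀ i, ∃ x : U, A x = Q n (A (e i)) ∧ ‖x‖ ≤ Real.sqrt (max C 1) := by
    intro i
    rcases lt_or_ge i n with hi | hi
    · refine ⟨e i, ?_, ?_⟩
      · obtain ⟨h1, h2⟩ := hQ n (A (e i))
        have hm : A (e i) ∈ Submodule.span ℝ ((fun i => A (e i)) '' Set.Iio n) :=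
          Submodule.subset_span ⟨i, hi, rfl⟩
        have h0 := (Submodule.mem_orthogonal _ _).1 h2 _ (Submodule.sub_mem _ hm h1)
        exact sub_eq_zero.1 (inner_self_eq_zero.1 h0)
      · rw [he.1]
        exact Real.one_le_sqrt.2 (le_max_right _ _)
    · obtain ⟨h1, -⟩ := hQ n (A (e i))
      have himg : (fun i => A (e i)) '' Set.Iio n = (A : U →ₗ[ℝ] Y) '' (e '' Set.Iio n) := by
        rw [Set.image_image]; rfl
      rw [himg, Submodule.span_image] at h1
      obtain ⟨x, hx, hxe⟩ := h1
      refine ⟨x, hxe, Real.le_sqrt_of_sq_le ?_⟩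
      exact (hcoef n hn i hi x hx hxe).trans (le_max_left _ _)
  choose x hx hxn using hpre
  have hb : ∀ i, ‖⟪uex, e i⟫ • x i‖ ≤ |⟪uex, e i⟫| * Real.sqrt (max C 1) := by
    intro i
    rw [norm_smul, Real.norm_eq_abs]
    exact mul_le_mul_of_nonneg_left (hxn i) (abs_nonneg _)
  have hHS : HasSum (fun i : ℕ => |⟪uex, e i⟫| * Real.sqrt (max C 1))
      (S * Real.sqrt (max C 1)) := by
    rw [← hS]
    exact hsummable.hasSum.mul_right _
  have hsx : Summable (fun i => ⟪uex, e i⟫ • x i) := Summable.of_norm_bounded hHS.summable hb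
  have hwx : w = ∑' i, ⟪uex, e i⟫ • x i := by
    apply hA
    rw [hw]
    have h1 := (hexp.mapL A).mapL (Q n)
    have h2 := hsx.hasSum.mapL A
    refine h1.unique ?_
    convert h2 using 2 with i
    simp [hx]
  rw [hwx]
  exact tsum_of_norm_bounded hHS hb
end

section
/- Fix i ≥ 2 with u^i ∉ U_{i-1} and set û^i = (u^i − P_{U_{i-1}} u^i)/‖u^i − P_{U_{i-1}} u^i‖. Assume there is a constant C > 0 such that every w ∈ U_{i-1} with A w = P_{Y_{i-1}}(A û^i) satisfies ‖w‖² ≤ C. Then every w ∈ U with A w = y^i − P_{Y_{i-1}} y^i satisfies ‖w‖ ≤ √(C+1) · ‖u^i − P_{U_{i-1}} u^i‖; consequently the normalized element ū^i = w/‖y^i − P_{Y_{i-1}} y^i‖ satisfies ‖ū^i‖ ≤ √(C+1) · ‖u^i − P_{U_{i-1}} u^i‖ / ‖y^i − P_{Y_{i-1}} y^i‖. -/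
/-- Let `U`, `Y` be real Hilbert spaces, `A : U → Y` an injective bounded linear operator,
`(uᵢ)` a linearly independent sequence in `U`, `yᵢ = A uᵢ`,
`U_{i-1} = span {u₀, …, u_{i-1}}`, `Y_{i-1} = span {y₀, …, y_{i-1}}` with orthogonal
projections `P`, `Q` (0-based: the paper's index `i ≥ 2` is `i ≥ 1` here).  Fix `i ≥ 1`
with `uᵢ ∉ U_{i-1}` and set `ûᵢ = (uᵢ − P uᵢ)/‖uᵢ − P uᵢ‖`.  Assume there is `C > 0`
such that every `w ∈ U_{i-1}` with `A w = Q (A ûᵢ)` satisfies `‖w‖² ≤ C`.  Then every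
`w ∈ U` with `A w = yᵢ − Q yᵢ` satisfies `‖w‖ ≤ √(C+1) · ‖uᵢ − P uᵢ‖`; consequently
`ūᵢ = w/‖yᵢ − Q yᵢ‖` satisfies `‖ūᵢ‖ ≤ √(C+1) · ‖uᵢ − P uᵢ‖ / ‖yᵢ − Q yᵢ‖`. -/
theorem norm_transformed_input_upper_bound
    {U Y : Type*} [NormedAddCommGroup U] [InnerProductSpace ℝ U] [CompleteSpace U]
    [NormedAddCommGroup Y] [InnerProductSpace ℝ Y] [CompleteSpace Y]
    (A : U →L[ℝ] Y) (hA : Function.Injective A)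
    (u : ℕ → U) (hindep : LinearIndependent ℝ u)
    (i : ℕ) (hi : 1 ≤ i)
    (hnotmem : u i ∉ Submodule.span ℝ (u '' Set.Iio i))
    (P : U →L[ℝ] U)
    (hP : ∀ x : U, P x ∈ Submodule.span ℝ (u '' Set.Iio i) ∧
      x - P x ∈ (Submodule.span ℝ (u '' Set.Iio i))ᗮ)
    (Q : Y →L[ℝ] Y)
    (hQ : ∀ z : Y, Q z ∈ Submodule.span ℝ ((fun j => A (u j)) '' Set.Iio i) ∧
      z - Q z ∈ (Submodule.span ℝ ((fun j => A (u j)) '' Set.Iio i))ᗮ)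
    (uhat : U) (huhat : uhat = ‖u i - P (u i)‖⁻¹ • (u i - P (u i)))
    (C : ℝ) (hC : 0 < C)
    (hcoef : ∀ w ∈ Submodule.span ℝ (u '' Set.Iio i),
      A w = Q (A uhat) → ‖w‖ ^ 2 ≤ C) :
    ∀ w : U, A w = A (u i) - Q (A (u i)) →
      ‖w‖ ≤ Real.sqrt (C + 1) * ‖u i - P (u i)‖ ∧
      ‖(‖A (u i) - Q (A (u i))‖⁻¹ • w)‖
        ≤ Real.sqrt (C + 1) * ‖u i - P (u i)‖ / ‖A (u i) - Q (A (u i))‖ := by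
  have hspan : Submodule.span ℝ ((fun j => A (u j)) '' Set.Iio i)
      = (Submodule.span ℝ (u '' Set.Iio i)).map (A : U →ₗ[ℝ] Y) := by
    rw [Submodule.map_span, ← Set.image_comp]
    rfl
  intro w hw
  have hd0 : u i - P (u i) ≠ 0 := by
    intro h
    apply hnotmem
    rw [sub_eq_zero.mp h]
    exact (hP (u i)).1
  have hr : 0 < ‖u i - P (u i)‖ := norm_pos_iff.mpr hd0
  have hPmem : A (P (u i)) ∈ Submodule.span ℝ ((fun j => A (u j)) '' Set.Iio i) := by
    rw [hspan]
    exact ⟨_, (hP (u i)).1, rfl⟩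
  have hfix : A (P (u i)) - Q (A (P (u i))) = 0 := by
    have h1 := (hQ (A (P (u i)))).2
    have h2 := Submodule.sub_mem _ hPmem (hQ (A (P (u i)))).1
    have h3 := Submodule.inner_right_of_mem_orthogonal h2 h1
    exact inner_self_eq_zero.mp h3
  obtain ⟨v, hv, hvA⟩ : ∃ v ∈ Submodule.span ℝ (u '' Set.Iio i), A v = Q (A uhat) := by
    have h := (hQ (A uhat)).1
    rw [hspan] at h
    obtain ⟨v, hv, h⟩ := h
    exact ⟨v, hv, h⟩
  have hvC := hcoef v hv hvA
  have hdr : u i - P (u i) = ‖u i - P (u i)‖ • uhat := by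
    rw [huhat, smul_smul, mul_inv_cancel₀ hr.ne', one_smul]
  have hun : ‖uhat‖ = 1 := by
    rw [huhat, norm_smul, norm_inv, norm_norm, inv_mul_cancel₀ hr.ne']
  have horth : inner ℝ uhat v = 0 := by
    rw [huhat, inner_smul_left,
      Submodule.inner_left_of_mem_orthogonal hv (hP (u i)).2, mul_zero]
  have hweq : w = ‖u i - P (u i)‖ • (uhat - v) := by
    apply hA
    have h1 : A (u i - P (u i)) - Q (A (u i - P (u i))) = A (u i) - Q (A (u i)) := by
      have h2 : A (u i - P (u i)) - Q (A (u i - P (u i)))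
          = A (u i) - Q (A (u i)) - (A (P (u i)) - Q (A (P (u i)))) := by
        simp only [map_sub]; abel
      rw [h2, hfix, sub_zero]
    rw [hw, ← h1, map_smul, map_sub A uhat v, hvA, smul_sub, ← map_smul, ← map_smul, ← map_smul, ← hdr]
  have hnorm : ‖uhat - v‖ ≤ Real.sqrt (C + 1) := by
    apply Real.le_sqrt_of_sq_le
    rw [norm_sub_sq_real, horth, hun]
    linarith
  have hmain : ‖w‖ ≤ Real.sqrt (C + 1) * ‖u i - P (u i)‖ := by
    rw [hweq, norm_smul, norm_norm, mul_comm]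
    exact mul_le_mul_of_nonneg_right hnorm hr.le
  refine ⟨hmain, ?_⟩
  rw [norm_smul, norm_inv, norm_norm, inv_mul_eq_div]
  exact div_le_div_of_nonneg_right hmain (norm_nonneg _)
end

section
/- If Σ_{i=1}^∞ |⟨y, ȳ^i⟩| · ‖ū^i‖ < ∞, then the partial sums s_n := Σ_{i=1}^n ⟨y, ȳ^i⟩ ū^i converge in norm to u† as n → ∞. -/
open scoped RealInnerProductSpace

/-- Let `U`, `Y` be real Hilbert spaces, `A : U → Y` an injective bounded linear operator,
`uex ∈ U`, `y = A uex`.  Let `(ȳᵢ)` be an orthonormal sequence in `Y` such that `y`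
lies in the closed linear span of the `ȳᵢ`, and `ūᵢ ∈ U` with `A ūᵢ = ȳᵢ`.
If `Σᵢ |⟪y, ȳᵢ⟫| · ‖ūᵢ‖ < ∞`, then the partial sums `sₙ = Σ_{i<n} ⟪y, ȳᵢ⟫ ūᵢ`
converge in norm to `uex`. -/
theorem strong_convergence_of_absolutely_convergent_series
    {U Y : Type*} [NormedAddCommGroup U] [InnerProductSpace ℝ U] [CompleteSpace U]
    [NormedAddCommGroup Y] [InnerProductSpace ℝ Y] [CompleteSpace Y]
    (A : U →L[ℝ] Y) (hA : Function.Injective A)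
    (uex : U) (y : Y) (hy : y = A uex)
    (yb : ℕ → Y) (hyb : Orthonormal ℝ yb)
    (hyspan : y ∈ (Submodule.span ℝ (Set.range yb)).topologicalClosure)
    (ub : ℕ → U) (hub : ∀ i, A (ub i) = yb i)
    (habs : Summable (fun i : ℕ => |⟪y, yb i⟫| * ‖ub i‖)) :
    Filter.Tendsto (fun n : ℕ => ∑ i ∈ Finset.range n, ⟪y, yb i⟫ • ub i)
      Filter.atTop (nhds uex) := by
  have hsum : Summable (fun i : ℕ => ⟪y, yb i⟫ • ub i) := by
    refine Summable.of_norm ?_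
    simpa [norm_smul] using habs
  obtain ⟨s, hs⟩ := hsum
  have hz : HasSum (fun i : ℕ => ⟪y, yb i⟫ • yb i) (A s) := by
    simpa [hub] using hs.mapL A
  have hperp : ∀ j, ⟪y - A s, yb j⟫ = 0 := by
    intro j
    have h1 := hz.mapL (innerSL ℝ (yb j))
    have h2 : HasSum (fun i : ℕ => (innerSL ℝ (yb j)) (⟪y, yb i⟫ • yb i)) ⟪y, yb j⟫ := by
      have h3 := hasSum_single (f := fun i : ℕ => (innerSL ℝ (yb j)) (⟪y, yb i⟫ • yb i)) j (by
        intro i hi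
        simp [inner_smul_right, hyb.2 (Ne.symm hi)])
      simpa [inner_smul_right, hyb.1 j] using h3
    have h4 := h1.unique h2
    rw [innerSL_apply_apply, real_inner_comm] at h4
    rw [inner_sub_left, h4, sub_self]
  have hmem : A s ∈ (Submodule.span ℝ (Set.range yb)).topologicalClosure := by
    refine mem_closure_of_tendsto hz (Filter.Eventually.of_forall fun t => ?_)
    exact Submodule.sum_mem _ fun i _ =>
      Submodule.smul_mem _ _ (Submodule.subset_span ⟨i, rfl⟩)
  have hle : (Submodule.span ℝ (Set.range yb)).topologicalClosure ≤
      (Submodule.span ℝ {y - A s})ᗮ := by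
    refine Submodule.topologicalClosure_minimal _ ?_ (Submodule.isClosed_orthogonal _)
    rw [Submodule.span_le]
    rintro _ ⟨j, rfl⟩
    exact Submodule.mem_orthogonal_singleton_iff_inner_right.2 (hperp j)
  have h0 : y - A s = 0 := by
    have := Submodule.mem_orthogonal_singleton_iff_inner_right.1
      (hle (Submodule.sub_mem _ hyspan hmem))
    exact inner_self_eq_zero.1 this
  have hse : uex = s := hA (by rw [← hy]; exact sub_eq_zero.1 h0)
  rw [hse]
  exact hs.tendsto_sum_nat
end

section
/- Assume: (i) there is a constant C₁ with |⟨y, ȳ^i⟩| ≤ C₁ · ‖y^i − P_{Y_{i-1}} y^i‖ for all i; (ii) Σ_{i=1}^∞ ‖u^i − P_{U_{i-1}} u^i‖ < ∞; and (iii) there is a constant C₂ with ‖ū^i‖ ≤ C₂ · ‖u^i − P_{U_{i-1}} u^i‖ / ‖y^i − P_{Y_{i-1}} y^i‖ for all i. Then the partial sums Σ_{i=1}^n ⟨y, ȳ^i⟩ ū^i converge in norm to u† as n → ∞, i.e. regularisation by projection converges strongly to the exact solution. -/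
open scoped RealInnerProductSpace

/-- Let `U`, `Y` be real Hilbert spaces, `A : U → Y` an injective bounded linear operator,
`(uᵢ)` a linearly independent sequence in `U`, `yᵢ = A uᵢ`,
`Uᵢ = span {u₀, …, u_{i-1}}`, `Yᵢ = span {y₀, …, y_{i-1}}` (with `U₀ = Y₀ = {0}`),
with orthogonal projections `P i`, `Q i`.  Define the Gram–Schmidt orthonormalisation
`ȳᵢ = (yᵢ − Q i yᵢ)/‖yᵢ − Q i yᵢ‖` and let `ūᵢ ∈ U` be the unique element with
`A ūᵢ = ȳᵢ`.  Let `uex ∈ U`, `y = A uex` with `y` in the closed linear span of the `yᵢ`.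
Assume (i) `|⟪y, ȳᵢ⟫| ≤ C₁ ‖yᵢ − Q i yᵢ‖` for all `i`;
(ii) `Σᵢ ‖uᵢ − P i uᵢ‖ < ∞`; and
(iii) `‖ūᵢ‖ ≤ C₂ ‖uᵢ − P i uᵢ‖ / ‖yᵢ − Q i yᵢ‖` for all `i`.
Then the partial sums `Σ_{i<n} ⟪y, ȳᵢ⟫ ūᵢ` converge in norm to `uex`. -/
theorem strong_convergence_of_regularisation_by_projection
    {U Y : Type*} [NormedAddCommGroup U] [InnerProductSpace ℝ U] [CompleteSpace U]
    [NormedAddCommGroup Y] [InnerProductSpace ℝ Y] [CompleteSpace Y]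
    (A : U →L[ℝ] Y) (hA : Function.Injective A)
    (u : ℕ → U) (hindep : LinearIndependent ℝ u)
    (P : ℕ → U →L[ℝ] U)
    (hP : ∀ i, ∀ x : U, P i x ∈ Submodule.span ℝ (u '' Set.Iio i) ∧
      x - P i x ∈ (Submodule.span ℝ (u '' Set.Iio i))ᗮ)
    (Q : ℕ → Y →L[ℝ] Y)
    (hQ : ∀ i, ∀ z : Y, Q i z ∈ Submodule.span ℝ ((fun j => A (u j)) '' Set.Iio i) ∧
      z - Q i z ∈ (Submodule.span ℝ ((fun j => A (u j)) '' Set.Iio i))ᗮ)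
    (yb : ℕ → Y)
    (hyb : ∀ i, yb i = ‖A (u i) - Q i (A (u i))‖⁻¹ • (A (u i) - Q i (A (u i))))
    (ub : ℕ → U) (hub : ∀ i, A (ub i) = yb i)
    (uex : U) (y : Y) (hy : y = A uex)
    (hyspan : y ∈ (Submodule.span ℝ (Set.range fun i => A (u i))).topologicalClosure)
    (C₁ : ℝ) (h1 : ∀ i, |⟪y, yb i⟫| ≤ C₁ * ‖A (u i) - Q i (A (u i))‖)
    (h2 : Summable (fun i : ℕ => ‖u i - P i (u i)‖))
    (C₂ : ℝ) (h3 : ∀ i, ‖ub i‖ ≤ C₂ * ‖u i - P i (u i)‖ / ‖A (u i) - Q i (A (u i))‖) :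
    Filter.Tendsto (fun n : ℕ => ∑ i ∈ Finset.range n, ⟪y, yb i⟫ • ub i)
      Filter.atTop (nhds uex) := by
  have hd : ∀ i, A (u i) - Q i (A (u i)) = ‖A (u i) - Q i (A (u i))‖ • yb i := by
    intro i
    rw [hyb i, smul_smul]
    by_cases h : A (u i) - Q i (A (u i)) = 0
    · simp [h]
    · rw [mul_inv_cancel₀ (norm_ne_zero_iff.mpr h), one_smul]
  have hmono : ∀ i j, i ≤ j → Submodule.span ℝ ((fun j => A (u j)) '' Set.Iio i) ≤
      Submodule.span ℝ ((fun j => A (u j)) '' Set.Iio j) := fun i j hij =>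
    Submodule.span_mono (Set.image_mono (Set.Iio_subset_Iio hij))
  have hybmem : ∀ i j, i < j → yb i ∈ Submodule.span ℝ ((fun j => A (u j)) '' Set.Iio j) := by
    intro i j hij
    rw [hyb i]
    refine Submodule.smul_mem _ _ (Submodule.sub_mem _ ?_ (hmono i j hij.le (hQ i _).1))
    exact Submodule.subset_span ⟨i, hij, rfl⟩
  have hyborth : ∀ i j, i < j → ⟪yb i, yb j⟫ = 0 := by
    intro i j hij
    have h := (Submodule.mem_orthogonal _ _).1 (hQ j (A (u j))).2 _ (hybmem i j hij)
    rw [hyb j, inner_smul_right, h, mul_zero]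
  have horth : ∀ i j, i ≠ j → ⟪yb i, yb j⟫ = 0 := by
    intro i j hij
    rcases lt_or_gt_of_ne hij with h | h
    · exact hyborth i j h
    · rw [real_inner_comm]; exact hyborth j i h
  have hself : ∀ j, ⟪y, yb j⟫ * ⟪yb j, yb j⟫ = ⟪y, yb j⟫ := by
    intro j
    by_cases h : A (u j) - Q j (A (u j)) = 0
    · have : yb j = 0 := by rw [hyb j, h, smul_zero]
      simp [this]
    · have : ‖yb j‖ = 1 := by
        rw [hyb j, norm_smul, norm_inv, norm_norm, inv_mul_cancel₀ (norm_ne_zero_iff.mpr h)]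
      rw [real_inner_self_eq_norm_sq, this]; norm_num
  have hsum : Summable (fun i => ⟪y, yb i⟫ • ub i) := by
    refine Summable.of_norm_bounded (h2.mul_left (|C₁ * C₂|)) ?_
    intro i
    rw [norm_smul, Real.norm_eq_abs]
    have hb := mul_le_mul (h1 i) (h3 i) (norm_nonneg _) ((abs_nonneg _).trans (h1 i))
    refine hb.trans ?_
    by_cases h : ‖A (u i) - Q i (A (u i))‖ = 0
    · rw [h]; simp only [mul_zero, zero_mul]; positivity
    · have he : C₁ * ‖A (u i) - Q i (A (u i))‖ *
          (C₂ * ‖u i - P i (u i)‖ / ‖A (u i) - Q i (A (u i))‖) =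
          (C₁ * C₂) * ‖u i - P i (u i)‖ := by
        field_simp
      rw [he]
      exact mul_le_mul_of_nonneg_right (le_abs_self _) (norm_nonneg _)
  obtain ⟨s, hs⟩ := hsum
  have hAs : HasSum (fun i => ⟪y, yb i⟫ • yb i) (A s) := by
    have := A.hasSum hs
    simpa only [map_smul, hub] using this
  have hin : ∀ j, ⟪yb j, y - A s⟫ = 0 := by
    intro j
    have h := (innerSL ℝ (yb j)).hasSum hAs
    have h' := hasSum_single (f := fun i => innerSL ℝ (yb j) (⟪y, yb i⟫ • yb i)) j (by
      intro i hij
      simp [inner_smul_right, horth j i hij.symm])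
    have e := h.unique h'
    simp only [innerSL_apply_apply, inner_smul_right, hself] at e
    rw [inner_sub_right, e, real_inner_comm, sub_self]
  have hin2 : ∀ j, ⟪A (u j), y - A s⟫ = 0 := by
    intro j
    induction j using Nat.strong_induction_on with
    | _ j ih =>
      have hK : Submodule.span ℝ ((fun j => A (u j)) '' Set.Iio j) ≤
          (Submodule.span ℝ {y - A s})ᗮ := by
        rw [Submodule.span_le]
        rintro _ ⟨k, hk, rfl⟩
        exact Submodule.mem_orthogonal_singleton_iff_inner_left.2 (ih k hk)
      have hq := Submodule.mem_orthogonal_singleton_iff_inner_left.1 (hK (hQ j (A (u j))).1)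
      have e : A (u j) = ‖A (u j) - Q j (A (u j))‖ • yb j + Q j (A (u j)) := by
        rw [← hd j, sub_add_cancel]
      rw [e, inner_add_left, hq, real_inner_smul_left, hin j, mul_zero, add_zero]
  have hK : (Submodule.span ℝ (Set.range fun i => A (u i))).topologicalClosure ≤
      (Submodule.span ℝ {y - A s})ᗮ := by
    refine Submodule.topologicalClosure_minimal _ ?_ (Submodule.isClosed_orthogonal _)
    rw [Submodule.span_le]
    rintro _ ⟨k, rfl⟩
    exact Submodule.mem_orthogonal_singleton_iff_inner_left.2 (hin2 k)
  have hAsmem : A s ∈ (Submodule.span ℝ (Set.range fun i => A (u i))).topologicalClosure := by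
    refine (Submodule.isClosed_topologicalClosure _).mem_of_tendsto hAs
      (Filter.Eventually.of_forall fun t => ?_)
    refine Submodule.sum_mem _ fun i _ => Submodule.smul_mem _ _ ?_
    refine Submodule.le_topologicalClosure _ ?_
    exact Submodule.span_mono (Set.image_subset_range _ _) (hybmem i (i + 1) (Nat.lt_succ_self i))
  have hz := Submodule.mem_orthogonal_singleton_iff_inner_left.1
    (hK (Submodule.sub_mem _ hyspan hAsmem))
  have hz' : A uex = A s := by
    rw [← hy]; exact sub_eq_zero.1 (inner_self_eq_zero.1 hz)
  rw [hA hz']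
  exact hs.tendsto_sum_nat
end

section
/- Let u† ∈ U and y = A u†. Then R u† is the minimum-norm solution of the projected equation Q(A u) = Q y; that is: Q(A(R u†)) = Q y, and for every v ∈ U with Q(A v) = Q y one has ‖R u†‖ ≤ ‖v‖, with equality only if v = R u†. -/
/-- Let `U`, `Y` be real Hilbert spaces, `A : U → Y` an injective bounded linear operator
with adjoint `A*`, `Yₙ` a finite-dimensional subspace of `Y` with orthogonal
projection `Q`, and `Z = A*(Yₙ)` with orthogonal projection `R`.  Let `uex ∈ U` and
`y = A uex`.  Then `R uex` is the minimum-norm solution of `Q (A u) = Q y`: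
`Q (A (R uex)) = Q y`, and for every `v` with `Q (A v) = Q y` one has
`‖R uex‖ ≤ ‖v‖`, with equality only if `v = R uex`. -/
theorem dual_least_squares_minimum_norm_solution
    {U Y : Type*} [NormedAddCommGroup U] [InnerProductSpace ℝ U] [CompleteSpace U]
    [NormedAddCommGroup Y] [InnerProductSpace ℝ Y] [CompleteSpace Y]
    (A : U →L[ℝ] Y) (hA : Function.Injective A)
    (Yn : Submodule ℝ Y) (hYn : FiniteDimensional ℝ Yn)
    (Q : Y →L[ℝ] Y)
    (hQ : ∀ z : Y, Q z ∈ Yn ∧ z - Q z ∈ Ynᗮ)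
    (R : U →L[ℝ] U)
    (hR : ∀ x : U,
      R x ∈ Yn.map ((ContinuousLinearMap.adjoint A : Y →L[ℝ] U) : Y →ₗ[ℝ] U) ∧
      x - R x ∈ (Yn.map ((ContinuousLinearMap.adjoint A : Y →L[ℝ] U) : Y →ₗ[ℝ] U))ᗮ)
    (uex : U) (y : Y) (hy : y = A uex) :
    Q (A (R uex)) = Q y ∧
    ∀ v : U, Q (A v) = Q y →
      ‖R uex‖ ≤ ‖v‖ ∧ (‖v‖ = ‖R uex‖ → v = R uex) := by
  subst hy
  have h1 : Q (A (R uex)) = Q (A uex) := by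
    have hx := (hR uex).2
    have hAx : A (uex - R uex) ∈ Ynᗮ := by
      rw [Submodule.mem_orthogonal] at hx ⊢
      intro w hw
      have h := hx (ContinuousLinearMap.adjoint A w) (Submodule.mem_map_of_mem hw)
      rwa [ContinuousLinearMap.adjoint_inner_left] at h
    obtain ⟨ha, hb⟩ := hQ (A (uex - R uex))
    have hc : Q (A (uex - R uex)) ∈ Ynᗮ := by
      have h := Ynᗮ.sub_mem hAx hb
      rwa [sub_sub_cancel] at h
    have h0 : Q (A (uex - R uex)) = 0 :=
      inner_self_eq_zero.mp ((Submodule.mem_orthogonal _ _).mp hc _ ha)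
    rw [map_sub, map_sub, sub_eq_zero] at h0
    exact h0.symm
  refine ⟨h1, fun v hv => ?_⟩
  have h0 : Q (A (v - R uex)) = 0 := by
    rw [map_sub, map_sub, hv, h1, sub_self]
  have hb := (hQ (A (v - R uex))).2
  rw [h0, sub_zero] at hb
  obtain ⟨w, hw, hwR⟩ := (hR uex).1
  have hin : inner ℝ (R uex) (v - R uex) = 0 := by
    rw [← hwR]
    change inner ℝ (ContinuousLinearMap.adjoint A w) _ = 0
    rw [ContinuousLinearMap.adjoint_inner_left]
    rw [← hwR] at hb
    exact (Submodule.mem_orthogonal _ _).mp hb w hw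
  have hp := norm_add_sq_eq_norm_sq_add_norm_sq_of_inner_eq_zero _ _ hin
  rw [add_sub_cancel] at hp
  refine ⟨?_, fun he => ?_⟩
  · nlinarith [norm_nonneg v, norm_nonneg (R uex), mul_self_nonneg ‖v - R uex‖]
  · rw [he] at hp
    have h : ‖v - R uex‖ = 0 := mul_self_eq_zero.mp (by linarith)
    exact sub_eq_zero.mp (norm_eq_zero.mp h)
end

section
/- Let B : Y → U be a bounded linear operator such that for every y ∈ Y and every w ∈ U with A w = Q y one has B y = R w (i.e. B = R∘A^{-1}∘Q). Then B is the Moore–Penrose inverse of Q∘A, i.e. the four Moore–Penrose equations hold: (Q∘A)∘B∘(Q∘A) = Q∘A; B∘(Q∘A)∘B = B; B∘(Q∘A) = R; (Q∘A)∘B = Q. -/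
/-- Let `U`, `Y` be real Hilbert spaces, `A : U → Y` an injective bounded linear operator
with adjoint `A*`, `Yₙ` a finite-dimensional subspace of `Y` contained in the range of
`A` with orthogonal projection `Q`, and `Z = A*(Yₙ)` with orthogonal projection `R`.
If `B : Y → U` is a bounded linear operator such that for every `y` and every `w` with
`A w = Q y` one has `B y = R w` (i.e. `B = R ∘ A⁻¹ ∘ Q`), then `B` is the
Moore–Penrose inverse of `Q ∘ A`: the four Moore–Penrose equations hold. -/
theorem moore_penrose_inverse_of_dual_projected_operator
    {U Y : Type*} [NormedAddCommGroup U] [InnerProductSpace ℝ U] [CompleteSpace U]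
    [NormedAddCommGroup Y] [InnerProductSpace ℝ Y] [CompleteSpace Y]
    (A : U →L[ℝ] Y) (hA : Function.Injective A)
    (Yn : Submodule ℝ Y) (hYn : FiniteDimensional ℝ Yn)
    (hYnA : (Yn : Set Y) ⊆ Set.range A)
    (Q : Y →L[ℝ] Y)
    (hQ : ∀ z : Y, Q z ∈ Yn ∧ z - Q z ∈ Ynᗮ)
    (R : U →L[ℝ] U)
    (hR : ∀ x : U,
      R x ∈ Yn.map ((ContinuousLinearMap.adjoint A : Y →L[ℝ] U) : Y →ₗ[ℝ] U) ∧
      x - R x ∈ (Yn.map ((ContinuousLinearMap.adjoint A : Y →L[ℝ] U) : Y →ₗ[ℝ] U))ᗮ)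
    (B : Y →L[ℝ] U)
    (hB : ∀ y : Y, ∀ w : U, A w = Q y → B y = R w) :
    (∀ u : U, Q (A (B (Q (A u)))) = Q (A u)) ∧
    (∀ y : Y, B (Q (A (B y))) = B y) ∧
    (∀ u : U, B (Q (A u)) = R u) ∧
    (∀ y : Y, Q (A (B y)) = Q y) := by
  have key : ∀ {V : Type _} [NormedAddCommGroup V] [InnerProductSpace ℝ V]
      (K : Submodule ℝ V) (P : V →L[ℝ] V) (_ : ∀ z, P z ∈ K ∧ z - P z ∈ Kᗮ)
      (v : V), v ∈ Kᗮ → P v = 0 := by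
    intro V _ _ K P hP v hv
    have h1 : P v ∈ Kᗮ := by
      have := Kᗮ.sub_mem hv (hP v).2
      simpa using this
    have h2 := (Submodule.mem_orthogonal K (P v)).1 h1 (P v) (hP v).1
    exact inner_self_eq_zero.1 h2
  have horth : ∀ x : U,
      x ∈ (Yn.map ((ContinuousLinearMap.adjoint A : Y →L[ℝ] U) : Y →ₗ[ℝ] U))ᗮ ↔
        A x ∈ Ynᗮ := by
    intro x
    rw [Submodule.mem_orthogonal, Submodule.mem_orthogonal]
    constructor
    · intro h y hy
      have := h _ (Submodule.mem_map_of_mem hy)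
      rwa [ContinuousLinearMap.coe_coe, ContinuousLinearMap.adjoint_inner_left] at this
    · rintro h _ ⟨y, hy, rfl⟩
      rw [ContinuousLinearMap.coe_coe, ContinuousLinearMap.adjoint_inner_left]
      exact h y hy
  have hQ0 : ∀ v ∈ Ynᗮ, Q v = 0 := by
    intro v hv
    have h1 : Q v ∈ Ynᗮ := by
      have := Ynᗮ.sub_mem hv (hQ v).2
      simpa using this
    exact inner_self_eq_zero.1 ((Submodule.mem_orthogonal Yn (Q v)).1 h1 (Q v) (hQ v).1)
  have hR0 := key _ R hR
  have hQQ : ∀ z, Q (Q z) = Q z := by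
    intro z
    have := hQ0 _ (hQ z).2
    rw [map_sub, sub_eq_zero] at this
    exact this.symm
  have h4 : ∀ y : Y, Q (A (B y)) = Q y := by
    intro y
    obtain ⟨w, hw⟩ := hYnA (hQ y).1
    rw [hB y w hw]
    have := hQ0 _ ((horth _).1 (hR w).2)
    rw [map_sub, map_sub, sub_eq_zero, hw, hQQ] at this
    exact this.symm
  refine ⟨fun u => by rw [h4, hQQ], fun y => ?_, fun u => ?_, h4⟩
  · obtain ⟨w, hw⟩ := hYnA (hQ y).1
    rw [h4, hB y w hw]
    exact hB _ w (by rw [hQQ, hw])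
  · obtain ⟨w, hw⟩ := hYnA (hQ (A u)).1
    rw [hB _ w (by rw [hQQ, hw])]
    have := hR0 (u - w) ((horth _).2 (by rw [map_sub, hw]; exact (hQ _).2))
    rw [map_sub, sub_eq_zero] at this
    exact this.symm
end

section
/- Let u† ∈ U. Then for every w ∈ U with A w = Q(A u†) one has R w = R u†; that is, the minimum-norm solution of the equation projected onto Y_n in the image space and the exact solution u† differ only on the orthogonal complement of A*(Y_n). -/
/-- Let `U`, `Y` be real Hilbert spaces, `A : U → Y` an injective bounded linear operator
with adjoint `A*`, `Yₙ` a finite-dimensional subspace of `Y` contained in the range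
of `A` with orthogonal projection `Q`, and `Z = A*(Yₙ)` with orthogonal projection
`R`.  Let `uex ∈ U`.  Then for every `w ∈ U` with `A w = Q (A uex)` one has
`R w = R uex`: the minimum-norm solution of the projected equation and the exact
solution differ only on the orthogonal complement of `A*(Yₙ)`. -/
theorem projected_solution_agrees_on_adjoint_subspace
    {U Y : Type*} [NormedAddCommGroup U] [InnerProductSpace ℝ U] [CompleteSpace U]
    [NormedAddCommGroup Y] [InnerProductSpace ℝ Y] [CompleteSpace Y]
    (A : U →L[ℝ] Y) (hA : Function.Injective A)
    (Yn : Submodule ℝ Y) (hYn : FiniteDimensional ℝ Yn)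
    (hYnA : (Yn : Set Y) ⊆ Set.range A)
    (Q : Y →L[ℝ] Y)
    (hQ : ∀ z : Y, Q z ∈ Yn ∧ z - Q z ∈ Ynᗮ)
    (R : U →L[ℝ] U)
    (hR : ∀ x : U,
      R x ∈ Yn.map ((ContinuousLinearMap.adjoint A : Y →L[ℝ] U) : Y →ₗ[ℝ] U) ∧
      x - R x ∈ (Yn.map ((ContinuousLinearMap.adjoint A : Y →L[ℝ] U) : Y →ₗ[ℝ] U))ᗮ)
    (uex : U) :
    ∀ w : U, A w = Q (A uex) → R w = R uex := by
  intro w hw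
  have hd : uex - w ∈
      (Yn.map ((ContinuousLinearMap.adjoint A : Y →L[ℝ] U) : Y →ₗ[ℝ] U))ᗮ := by
    rw [Submodule.mem_orthogonal]
    rintro _ ⟨y, hy, rfl⟩
    have h := (Submodule.mem_orthogonal _ _).1 (hQ (A uex)).2 y hy
    rw [← hw, ← map_sub] at h
    have h2 := ContinuousLinearMap.adjoint_inner_left A (uex - w) y
    exact h2.trans h
  obtain ⟨h1, h2⟩ := hR (uex - w)
  have h3 := Submodule.sub_mem _ hd h2
  rw [sub_sub_cancel] at h3
  have h4 : R (uex - w) = 0 :=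
    inner_self_eq_zero.1 ((Submodule.mem_orthogonal _ _).1 h3 _ h1)
  rw [map_sub] at h4
  exact (sub_eq_zero.1 h4).symm
end

section
/- Let ŷ^i := A e^i and Y_n := span{ŷ^1, ..., ŷ^n}. For every n ≥ 1 and every i ≥ n+1, if the orthogonal projection of ŷ^i onto Y_n is written as P_{Y_n} ŷ^i = Σ_{k=1}^n γ_k ŷ^k, then Σ_{k=1}^n γ_k² ≤ 1. -/
/-- The coefficients `aᵢ` of Seidman's example: `aᵢ = i⁻¹` for odd `i`,
`aᵢ = i^{-5/2}` for even `i`. -/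
noncomputable def seidmanA (i : ℕ+) : ℝ :=
  if Odd (i : ℕ) then ((i : ℕ) : ℝ)⁻¹ else ((i : ℕ) : ℝ) ^ (-(5 / 2) : ℝ)

/-- The coefficients `bᵢ` of Seidman's example: `b₁ = 0`, `bᵢ = i⁻¹` for `i ≥ 2`. -/
noncomputable def seidmanB (i : ℕ+) : ℝ :=
  if i = 1 then 0 else ((i : ℕ) : ℝ)⁻¹


lemma seidmanA_pos (i : ℕ+) : 0 < seidmanA i := by
  have : (0:ℝ) < ((i : ℕ) : ℝ) := by exact_mod_cast i.pos
  unfold seidmanA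
  split_ifs <;> positivity

lemma seidmanA_le (i : ℕ+) : seidmanA i ≤ ((i : ℕ) : ℝ)⁻¹ := by
  have h1 : (1:ℝ) ≤ ((i : ℕ) : ℝ) := by exact_mod_cast i.one_le
  unfold seidmanA
  split_ifs
  · exact le_rfl
  · rw [← Real.rpow_neg_one]
    exact Real.rpow_le_rpow_of_exponent_le h1 (by norm_num)

lemma seidmanA_sq (i : ℕ+) : 1 ≤ seidmanA i ^ 2 * ((i : ℕ) : ℝ) ^ 5 := by
  have h1 : (1:ℝ) ≤ ((i : ℕ) : ℝ) := by exact_mod_cast i.one_le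
  have h0 : (0:ℝ) < ((i : ℕ) : ℝ) := by linarith
  unfold seidmanA
  split_ifs
  · have : (((i : ℕ) : ℝ)⁻¹) ^ 2 * ((i : ℕ) : ℝ) ^ 5 = ((i : ℕ) : ℝ) ^ 3 := by
      field_simp
    rw [this]
    exact one_le_pow₀ h1
  · rw [← Real.rpow_natCast, ← Real.rpow_natCast, ← Real.rpow_mul h0.le, ← Real.rpow_add h0]
    norm_num

/-- Let `A : ℓ² → ℓ²` be the bounded linear operator of Seidman's example,
`(A ξ)ᵢ = aᵢ ξᵢ + bᵢ ξ₁`, let `(eᵢ)` be the standard orthonormal basis of `ℓ²`,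
`ŷᵢ = A eᵢ` and `Yₙ = span {ŷ₁, …, ŷₙ}`.  For every `n ≥ 1` and every `i ≥ n + 1`,
if the orthogonal projection of `ŷᵢ` onto `Yₙ` is written
`Q ŷᵢ = Σ_{k=1}^n γₖ ŷₖ`, then `Σ_{k=1}^n γₖ² ≤ 1`. -/
theorem seidman_projection_coefficients_bound
    (A : lp (fun _ : ℕ+ => ℝ) 2 →L[ℝ] lp (fun _ : ℕ+ => ℝ) 2)
    (hA : ∀ ξ : lp (fun _ : ℕ+ => ℝ) 2, ∀ i : ℕ+,
      (A ξ) i = seidmanA i * ξ i + seidmanB i * ξ 1)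
    (e : ℕ+ → lp (fun _ : ℕ+ => ℝ) 2) (he : ∀ i, e i = lp.single 2 i 1)
    (n i : ℕ+) (hi : n < i)
    (Q : lp (fun _ : ℕ+ => ℝ) 2 →L[ℝ] lp (fun _ : ℕ+ => ℝ) 2)
    (hQ : ∀ v, Q v ∈ Submodule.span ℝ ((fun j => A (e j)) '' Set.Iic n) ∧
      v - Q v ∈ (Submodule.span ℝ ((fun j => A (e j)) '' Set.Iic n))ᗮ)
    (γ : ℕ+ → ℝ)
    (hγ : Q (A (e i)) = ∑ k ∈ Finset.Icc 1 n, γ k • A (e k)) :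
    ∑ k ∈ Finset.Icc 1 n, γ k ^ 2 ≤ 1 := by
  classical
  have he' : ∀ k j : ℕ+, e k j = if j = k then 1 else 0 := by
    intro k j
    rw [he, lp.single_apply]
    by_cases h : j = k
    · subst h; simp
    · simp [h]
  have hn1 : (1 : ℕ+) ≤ n := PNat.one_le n
  have hi1 : i ≠ 1 := by
    rintro rfl
    exact absurd hi (not_lt.mpr hn1)
  have hi1' : (1 : ℕ+) ≠ i := fun h => hi1 h.symm
  set x : lp (fun _ : ℕ+ => ℝ) 2 := ∑ k ∈ Finset.Icc 1 n, γ k • e k with hx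
  set p := Q (A (e i)) with hp
  have hpx : p = A x := by
    rw [hγ, hx, map_sum]
    simp
  have hxj : ∀ j : ℕ+, x j = if j ≤ n then γ j else 0 := by
    intro j
    rw [hx, lp.coeFn_sum, Finset.sum_apply]
    simp [lp.coeFn_smul, he', PNat.one_le]
  have hpj : ∀ j : ℕ+, p j = seidmanA j * (if j ≤ n then γ j else 0) + seidmanB j * γ 1 := by
    intro j
    rw [hpx, hA, hxj, hxj, if_pos hn1]
  have hyk : ∀ k : ℕ+, k ≠ 1 → A (e k) = seidmanA k • e k := by
    intro k hk
    ext j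
    rw [hA, lp.coeFn_smul, Pi.smul_apply, he', he', if_neg hk.symm]
    by_cases h : j = k
    · subst h; simp
    · simp [h]
  have hin : ∀ (k : ℕ+) (v : lp (fun _ : ℕ+ => ℝ) 2), inner ℝ (e k) v = v k := by
    intro k v
    rw [he, lp.inner_single_left]
    simp
  obtain ⟨hpm, hor⟩ := hQ (A (e i))
  rw [← hp] at hpm hor
  have hrel : ∀ k : ℕ+, k ≤ n → k ≠ 1 → seidmanA k * γ k = -(seidmanB k * γ 1) := by
    intro k hk hk1
    have h := (Submodule.mem_orthogonal _ _).1 hor (A (e k))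
      (Submodule.subset_span ⟨k, hk, rfl⟩)
    rw [hyk k hk1, inner_smul_left, hin, lp.coeFn_sub, Pi.sub_apply, hpj, if_pos hk,
      hyk i hi1, lp.coeFn_smul, Pi.smul_apply, he',
      if_neg (ne_of_lt (lt_of_le_of_lt hk hi))] at h
    have ha := (seidmanA_pos k).ne'
    simp [ha] at h
    linarith
  have hpp : ‖p‖ ^ 2 = seidmanA i * (seidmanB i * γ 1) := by
    have h := (Submodule.mem_orthogonal' _ _).1 hor p hpm
    rw [inner_sub_left, real_inner_self_eq_norm_sq, hyk i hi1, inner_smul_left, hin, hpj,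
      if_neg (not_le.mpr hi)] at h
    simp at h
    linarith
  have hp1 : p 1 = γ 1 := by
    rw [hpj, if_pos hn1]
    simp [seidmanA, seidmanB]
  have hle : |γ 1| ≤ ‖p‖ := by
    have := lp.norm_apply_le_norm (p := 2) (by norm_num) p 1
    rwa [hp1, Real.norm_eq_abs] at this
  have hI : (0:ℝ) < ((i : ℕ) : ℝ) := by exact_mod_cast i.pos
  have hN : (0:ℝ) < ((n : ℕ) : ℝ) := by exact_mod_cast n.pos
  have hNI : ((n : ℕ) : ℝ) ≤ ((i : ℕ) : ℝ) := by exact_mod_cast hi.le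
  have hB : seidmanB i = ((i : ℕ) : ℝ)⁻¹ := by simp [seidmanB, hi1]
  have hg : |γ 1| * ((i : ℕ) : ℝ) ^ 2 ≤ 1 := by
    have h1 : |γ 1| ^ 2 ≤ ‖p‖ ^ 2 := pow_le_pow_left₀ (abs_nonneg _) hle 2
    rw [hpp, hB] at h1
    have h2 : seidmanA i * (((i : ℕ) : ℝ)⁻¹ * γ 1)
        ≤ ((i : ℕ) : ℝ)⁻¹ * (((i : ℕ) : ℝ)⁻¹ * |γ 1|) :=
      mul_le_mul (seidmanA_le i) (by gcongr; exact le_abs_self _) 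
        (by
          by_contra! hneg
          have := mul_neg_of_pos_of_neg (seidmanA_pos i) hneg
          nlinarith [sq_nonneg |γ 1|]) (by positivity)
    have h3 := h1.trans h2
    rcases (abs_nonneg (γ 1)).eq_or_lt with h0 | h0
    · rw [← h0]; simp
    · have h4 : |γ 1| ≤ ((i : ℕ) : ℝ)⁻¹ * ((i : ℕ) : ℝ)⁻¹ := by
        by_contra! hc
        nlinarith
      calc |γ 1| * ((i : ℕ) : ℝ) ^ 2
          ≤ (((i : ℕ) : ℝ)⁻¹ * ((i : ℕ) : ℝ)⁻¹) * ((i : ℕ) : ℝ) ^ 2 := by gcongr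
        _ = 1 := by field_simp
  have hterm : ∀ k ∈ Finset.Icc 1 n, γ k ^ 2 ≤ ((n : ℕ) : ℝ) ^ 3 * γ 1 ^ 2 := by
    intro k hk
    have hkn : k ≤ n := (Finset.mem_Icc.1 hk).2
    have hK : (0:ℝ) < ((k : ℕ) : ℝ) := by exact_mod_cast k.pos
    have hKN : ((k : ℕ) : ℝ) ≤ ((n : ℕ) : ℝ) := by exact_mod_cast hkn
    have hmain : γ k ^ 2 ≤ ((k : ℕ) : ℝ) ^ 3 * γ 1 ^ 2 := by
      by_cases hk1 : k = 1
      · subst hk1; simp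
      · have h := hrel k hkn hk1
        have hBk : seidmanB k = ((k : ℕ) : ℝ)⁻¹ := by simp [seidmanB, hk1]
        rw [hBk] at h
        calc γ k ^ 2 ≤ γ k ^ 2 * (seidmanA k ^ 2 * ((k : ℕ) : ℝ) ^ 5) :=
              le_mul_of_one_le_right (sq_nonneg _) (seidmanA_sq k)
          _ = (seidmanA k * γ k) ^ 2 * ((k : ℕ) : ℝ) ^ 5 := by ring
          _ = ((k : ℕ) : ℝ) ^ 3 * γ 1 ^ 2 := by rw [h]; field_simp
    exact hmain.trans (by gcongr)
  have hcard : (Finset.Icc 1 n).card = (n : ℕ) := by simp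
  calc ∑ k ∈ Finset.Icc 1 n, γ k ^ 2
      ≤ (Finset.Icc 1 n).card • (((n : ℕ) : ℝ) ^ 3 * γ 1 ^ 2) :=
        Finset.sum_le_card_nsmul _ _ _ hterm
    _ = (|γ 1| * ((n : ℕ) : ℝ) ^ 2) ^ 2 := by
        rw [hcard, nsmul_eq_mul, mul_pow, sq_abs]; ring
    _ ≤ (|γ 1| * ((i : ℕ) : ℝ) ^ 2) ^ 2 := by gcongr
    _ ≤ 1 := pow_le_one₀ (by positivity) hg
end

section
/- If u ∈ ℓ² lies in the range of the adjoint A*, i.e. u = A* v for some v ∈ ℓ², then the coefficients of u in the standard basis are absolutely summable: Σ_{i=1}^∞ |⟨u, e^i⟩| < ∞. -/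
open scoped RealInnerProductSpace

/-- Let `A : ℓ² → ℓ²` be the bounded linear operator of Seidman's example,
`(A ξ)ᵢ = aᵢ ξᵢ + bᵢ ξ₁`, let `(eᵢ)` be the standard orthonormal basis of `ℓ²` and
`A*` the Hilbert-space adjoint of `A`.  If `u ∈ ℓ²` lies in the range of `A*`, i.e.
`u = A* v` for some `v`, then `Σᵢ |⟪u, eᵢ⟫| < ∞`. -/
theorem seidman_source_condition_implies_l1
    (A : lp (fun _ : ℕ+ => ℝ) 2 →L[ℝ] lp (fun _ : ℕ+ => ℝ) 2)
    (hA : ∀ ξ : lp (fun _ : ℕ+ => ℝ) 2, ∀ i : ℕ+,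
      (A ξ) i = seidmanA i * ξ i + seidmanB i * ξ 1)
    (e : ℕ+ → lp (fun _ : ℕ+ => ℝ) 2) (he : ∀ i, e i = lp.single 2 i 1)
    (u v : lp (fun _ : ℕ+ => ℝ) 2)
    (huv : u = ContinuousLinearMap.adjoint A v) :
    Summable (fun i : ℕ+ => |⟪u, e i⟫|) := by
  have hsq : Summable (fun i : ℕ+ => (v i) ^ 2) := by
    have h := (lp.memℓp v).summable (by norm_num)
    simpa using h
  have hinv : Summable (fun i : ℕ+ => ((((i : ℕ) : ℝ)) ^ 2)⁻¹) := by
    have h : Summable (fun n : ℕ => (((n : ℝ)) ^ 2)⁻¹) :=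
      Real.summable_nat_pow_inv.mpr (by norm_num)
    exact h.comp_injective PNat.coe_injective
  have ha : ∀ i : ℕ+, |seidmanA i| ≤ ((i : ℕ) : ℝ)⁻¹ := by
    intro i
    have hi : (1 : ℝ) ≤ ((i : ℕ) : ℝ) := by exact_mod_cast i.one_le
    unfold seidmanA
    split_ifs
    · rw [abs_of_nonneg (by positivity)]
    · rw [abs_of_nonneg (by positivity), ← Real.rpow_neg_one]
      exact Real.rpow_le_rpow_of_exponent_le hi (by norm_num)
  have key : ∀ i : ℕ+, i ≠ 1 → ⟪u, e i⟫ = v i * seidmanA i := by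
    intro i hi
    have hAe : A (e i) = seidmanA i • e i := by
      ext j
      rw [hA, he]
      by_cases hj : j = i
      · subst hj
        simp [lp.single_apply, Ne.symm hi]
      · simp [lp.single_apply, hj, Ne.symm hi]
    rw [huv, ContinuousLinearMap.adjoint_inner_left, hAe, inner_smul_right, he,
      lp.inner_single_right]
    simp [mul_comm]
  refine Summable.of_norm_bounded_eventually (hsq.add hinv) ?_
  filter_upwards [(Set.finite_singleton (1 : ℕ+)).compl_mem_cofinite] with i hi
  rw [key i hi, Real.norm_eq_abs, abs_abs, abs_mul, ← inv_pow, ← sq_abs (v i)]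
  have h1 := mul_le_mul_of_nonneg_left (ha i) (abs_nonneg (v i))
  nlinarith [sq_nonneg (|v i| - ((i : ℕ) : ℝ)⁻¹), sq_nonneg (|v i|), sq_nonneg (((i : ℕ) : ℝ)⁻¹)]
end

section
/- Let α > 0, δ ≥ 0, C ≥ 0, q ∈ Y, u†, u_r ∈ U and y^δ ∈ Y. Assume: (i) ‖A u† − y^δ‖ ≤ δ; (ii) the source condition holds in the form J(u) ≥ J(u†) + ⟨q, A u − A u†⟩ for all u ∈ U (i.e. A*q is a subgradient of J at u†); (iii) u_r is a minimiser of the projected Tikhonov functional, i.e. (1/2)‖A(P u_r) − y^δ‖² + α J(u_r) ≤ (1/2)‖A(P u) − y^δ‖² + α J(u) for all u ∈ U; and (iv) ‖u_r‖ ≤ C. Then the Bregman distance D := J(u_r) − J(u†) − ⟨q, A u_r − A u†⟩ satisfies D ≤ (1/(2α)) (δ + ‖A‖·‖u† − P u†‖)² + (α/2)‖q‖² + δ‖q‖ + C·‖A*q − P(A*q)‖. -/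
open scoped RealInnerProductSpace

/-- Let `U`, `Y` be real Hilbert spaces, `A : U → Y` a bounded linear operator with
adjoint `A*`, `P` the orthogonal projection onto a finite-dimensional subspace `Uₙ`
of `U`, and `J : U → ℝ`.  Let `α > 0`, `δ ≥ 0`, `C ≥ 0`, `q ∈ Y`, `uex, ur ∈ U` and
`yδ ∈ Y`.  Assume (i) `‖A uex − yδ‖ ≤ δ`; (ii) the source condition
`J u ≥ J uex + ⟪q, A u − A uex⟫` for all `u`; (iii) `ur` minimises the projected
Tikhonov functional `u ↦ ½‖A (P u) − yδ‖² + α J u`; (iv) `‖ur‖ ≤ C`.  Then the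
Bregman distance `D = J ur − J uex − ⟪q, A ur − A uex⟫` satisfies
`D ≤ (1/(2α)) (δ + ‖A‖ ‖uex − P uex‖)² + (α/2) ‖q‖² + δ‖q‖ + C ‖A*q − P (A*q)‖`. -/
theorem bregman_distance_estimate_projected_variational
    {U Y : Type*} [NormedAddCommGroup U] [InnerProductSpace ℝ U] [CompleteSpace U]
    [NormedAddCommGroup Y] [InnerProductSpace ℝ Y] [CompleteSpace Y]
    (A : U →L[ℝ] Y)
    (Un : Submodule ℝ U) (hUn : FiniteDimensional ℝ Un)
    (P : U →L[ℝ] U)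
    (hP : ∀ x : U, P x ∈ Un ∧ x - P x ∈ Unᗮ)
    (J : U → ℝ)
    (α δ C : ℝ) (hα : 0 < α) (hδ : 0 ≤ δ) (hC : 0 ≤ C)
    (q : Y) (uex ur : U) (yδ : Y)
    (hnoise : ‖A uex - yδ‖ ≤ δ)
    (hsource : ∀ u : U, J uex + ⟪q, A u - A uex⟫ ≤ J u)
    (hmin : ∀ u : U, (1 / 2) * ‖A (P ur) - yδ‖ ^ 2 + α * J ur
      ≤ (1 / 2) * ‖A (P u) - yδ‖ ^ 2 + α * J u)
    (hbound : ‖ur‖ ≤ C) :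
    J ur - J uex - ⟪q, A ur - A uex⟫
      ≤ (1 / (2 * α)) * (δ + ‖A‖ * ‖uex - P uex‖) ^ 2 + (α / 2) * ‖q‖ ^ 2
        + δ * ‖q‖ + C * ‖ContinuousLinearMap.adjoint A q - P (ContinuousLinearMap.adjoint A q)‖ := by
  set w := ContinuousLinearMap.adjoint A q with hw
  have h1 : ‖A (P uex) - yδ‖ ≤ δ + ‖A‖ * ‖uex - P uex‖ := by
    have e : A (P uex) - yδ = (A uex - yδ) - A (uex - P uex) := by
      rw [map_sub]; abel
    rw [e]
    exact (norm_sub_le _ _).trans (add_le_add hnoise (A.le_opNorm _))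
  have h1sq : ‖A (P uex) - yδ‖ ^ 2 ≤ (δ + ‖A‖ * ‖uex - P uex‖) ^ 2 :=
    pow_le_pow_left₀ (norm_nonneg _) h1 2
  have hm := hmin uex
  have hsplit : ⟪q, A ur - A uex⟫ = ⟪q, A (ur - P ur)⟫ + ⟪q, A (P ur) - yδ⟫
      + ⟪q, yδ - A uex⟫ := by
    rw [← inner_add_right, ← inner_add_right, map_sub]
    congr 1
    abel
  have hadj : ⟪q, A (ur - P ur)⟫ = ⟪w - P w, ur⟫ := by
    rw [hw, ← ContinuousLinearMap.adjoint_inner_left, ← hw]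
    have o1 : ⟪P w, ur - P ur⟫ = 0 :=
      (Submodule.mem_orthogonal _ _).1 (hP ur).2 _ (hP w).1
    have o2 : ⟪P ur, w - P w⟫ = 0 :=
      (Submodule.mem_orthogonal _ _).1 (hP w).2 _ (hP ur).1
    rw [real_inner_comm] at o2
    simp only [inner_sub_left, inner_sub_right] at *
    linarith
  have b1 : -⟪w - P w, ur⟫ ≤ C * ‖w - P w‖ := by
    have := (abs_le.1 (abs_real_inner_le_norm (w - P w) ur)).1
    nlinarith [mul_le_mul_of_nonneg_left hbound (norm_nonneg (w - P w))]
  have b2 : -⟪q, A (P ur) - yδ⟫ ≤ ‖q‖ * ‖A (P ur) - yδ‖ := by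
    linarith [(abs_le.1 (abs_real_inner_le_norm q (A (P ur) - yδ))).1]
  have b3 : -⟪q, yδ - A uex⟫ ≤ δ * ‖q‖ := by
    have := (abs_le.1 (abs_real_inner_le_norm q (yδ - A uex))).1
    rw [norm_sub_rev] at this
    nlinarith [mul_le_mul_of_nonneg_left hnoise (norm_nonneg q)]
  have key : J ur - J uex + ‖q‖ * ‖A (P ur) - yδ‖
      ≤ (1 / (2 * α)) * (δ + ‖A‖ * ‖uex - P uex‖) ^ 2 + (α / 2) * ‖q‖ ^ 2 := by
    generalize δ + ‖A‖ * ‖uex - P uex‖ = E at *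
    have e : (1 / (2 * α)) * E ^ 2 + (α / 2) * ‖q‖ ^ 2
        = (E ^ 2 + α ^ 2 * ‖q‖ ^ 2) / (2 * α) := by
      field_simp
    rw [e, le_div_iff₀ (by positivity)]
    nlinarith [sq_nonneg (α * ‖q‖ - ‖A (P ur) - yδ‖)]
  rw [hsplit, hadj]
  linarith
end
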